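/- Let L be a residuated lattice. Then the intersection of all prime filters of L equals {1}, i.e. ⋂ {P : P ∈ Spec(L)} = {1}. -/

import Mathlib

/-- A residuated lattice: a bounded lattice with a commutative monoid
operation `mul` whose identity is the top element, and a residuum `himp`
satisfying `mul x y ≤ z ↔ x ≤ himp y z`. Here `⊤` plays the role of `1`
and `⊥` the role of `0`. -/
class ResiduatedLattice (L : Type*) extends Lattice L, BoundedOrder L where
  mul : L → L → L
  himp : L → L → L
  mul_comm : ∀ x y : L, mul x y = mul y x
  mul_assoc : ∀ x y z : L, mul (mul x y) z = mul x (mul y z)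
  mul_top : ∀ x : L, mul x ⊤ = x
  residuation : ∀ x y z : L, mul x y ≤ z ↔ x ≤ himp y z

namespace ResiduatedLattice

variable {L : Type*} [ResiduatedLattice L]

/-- A filter of a residuated lattice: a nonempty, upward closed subset
closed under `mul`. -/
def IsFilter (F : Set L) : Prop :=
  F.Nonempty ∧ (∀ x y : L, x ∈ F → x ≤ y → y ∈ F) ∧
    ∀ x y : L, x ∈ F → y ∈ F → mul x y ∈ F

/-- A prime filter: a proper filter such that `x ⊔ y ∈ P` implies
`x ∈ P` or `y ∈ P`. -/
def IsPrimeFilter (P : Set L) : Prop :=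
  IsFilter P ∧ P ≠ Set.univ ∧ ∀ x y : L, x ⊔ y ∈ P → x ∈ P ∨ y ∈ P

/-- `filterGen X` is the smallest filter containing `X`. -/
def filterGen (X : Set L) : Set L := ⋂₀ {F : Set L | IsFilter F ∧ X ⊆ F}

/-- The prime spectrum: the set of all prime filters. -/
def Spectrum (L : Type*) [ResiduatedLattice L] := {P : Set L // IsPrimeFilter P}

/-- `D X = {P ∈ Spec L | X ⊄ P}`. -/
def D (X : Set L) : Set (Spectrum L) := {P : Spectrum L | ¬ X ⊆ P.1}

/-- `O P = {x | a ⊔ x = 1 for some a ∉ P}`. -/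
def O (P : Set L) : Set L := {x : L | ∃ a ∉ P, a ⊔ x = ⊤}

/-- The congruence relation associated to a filter `F`:
`x ≡_F y` iff `(x → y) ⊗ (y → x) ∈ F`. -/
def rel (F : Set L) (x y : L) : Prop := mul (himp x y) (himp y x) ∈ F

end ResiduatedLattice

namespace ResiduatedLattice

/-!
A filter `P` maximal among those disjoint from a nonempty `⊔`-closed set `S` is prime. Indeed, the
inequality `(x ⊔ y) ⊗ (z ⊔ y) ≤ (x ⊗ z) ⊔ y` makes `{z | z ⊔ y ∈ P}` a filter, and it contains `P`.
If `x ⊔ y ∈ P` but `x, y ∉ P`, then `{z | z ⊔ y ∈ P}` is strictly larger than `P`, so it contains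
some `s ∈ S`; now `{z | z ⊔ s ∈ P}` contains `y ∉ P`, so it contains some `t ∈ S`, and `t ⊔ s` lies
in `P ∩ S`. By Zorn's lemma, any `a` outside a filter `F` is therefore avoided by a prime filter
containing `F`.
-/

section

variable {L : Type*} [ResiduatedLattice L] {F P S : Set L} {x y : L}

theorem gc_mul_himp (y : L) : GaloisConnection (fun x => mul x y) (himp y) :=
  fun x z => residuation x y z

theorem sup_mul (x y z : L) : mul (x ⊔ y) z = mul x z ⊔ mul y z :=
  (gc_mul_himp z).l_sup

theorem mul_sup (x y z : L) : mul x (y ⊔ z) = mul x y ⊔ mul x z := by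
  simp only [mul_comm x, sup_mul]

theorem mul_le_right (x y : L) : mul x y ≤ y :=
  calc
    mul x y ≤ mul ⊤ y := (gc_mul_himp y).monotone_l le_top
    _ = y := by rw [mul_comm, mul_top]

theorem mul_le_left (x y : L) : mul x y ≤ x :=
  (mul_comm x y).trans_le (mul_le_right y x)

theorem sup_mul_sup_le (x y z : L) : mul (x ⊔ y) (z ⊔ y) ≤ mul x z ⊔ y :=
  calc
    mul (x ⊔ y) (z ⊔ y) = mul x z ⊔ mul y z ⊔ mul (x ⊔ y) y := by rw [mul_sup, sup_mul x y z]
    _ ≤ mul x z ⊔ y ⊔ y := sup_le_sup (sup_le_sup_left (mul_le_left y z) _) (mul_le_right _ y)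
    _ = mul x z ⊔ y := by rw [sup_assoc, sup_idem]

theorem isFilter_singleton_top : IsFilter ({⊤} : Set L) := by
  refine ⟨Set.singleton_nonempty ⊤, ?_, ?_⟩
  · rintro x y rfl hxy
    exact top_le_iff.1 hxy
  · rintro x y rfl rfl
    exact mul_top ⊤

theorem IsFilter.mem_of_le (hF : IsFilter F) (hx : x ∈ F) (hxy : x ≤ y) : y ∈ F :=
  hF.2.1 x y hx hxy

theorem IsFilter.mul_mem (hF : IsFilter F) (hx : x ∈ F) (hy : y ∈ F) : mul x y ∈ F :=
  hF.2.2 x y hx hy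

theorem IsFilter.top_mem (hF : IsFilter F) : ⊤ ∈ F :=
  let ⟨_, hx⟩ := hF.1
  hF.mem_of_le hx le_top

theorem IsFilter.subset_preimage_sup_right (hF : IsFilter F) (y : L) : F ⊆ (· ⊔ y) ⁻¹' F :=
  fun _ hz => hF.mem_of_le hz le_sup_left

theorem IsFilter.preimage_sup_right (hF : IsFilter F) (y : L) : IsFilter ((· ⊔ y) ⁻¹' F) :=
  ⟨hF.1.mono (hF.subset_preimage_sup_right y),
    fun _ _ hu huv => hF.mem_of_le hu (sup_le_sup_right huv y),
    fun u v hu hv => hF.mem_of_le (hF.mul_mem hu hv) (sup_mul_sup_le u y v)⟩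

theorem isFilter_sUnion_of_directedOn {c : Set (Set L)} (hc : ∀ F ∈ c, IsFilter F)
    (hdir : DirectedOn (· ⊆ ·) c) (hne : c.Nonempty) : IsFilter (⋃₀ c) := by
  refine ⟨?_, ?_, ?_⟩
  · obtain ⟨F, hF⟩ := hne
    exact (hc F hF).1.mono (Set.subset_sUnion_of_mem hF)
  · rintro x y ⟨F, hF, hx⟩ hxy
    exact ⟨F, hF, (hc F hF).mem_of_le hx hxy⟩
  · rintro x y ⟨F, hF, hx⟩ ⟨G, hG, hy⟩
    obtain ⟨H, hH, hFH, hGH⟩ := hdir F hF G hG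
    exact ⟨H, hH, (hc H hH).mul_mem (hFH hx) (hGH hy)⟩

theorem IsFilter.exists_maximal_disjoint (hF : IsFilter F) (hFS : Disjoint F S) :
    ∃ P, F ⊆ P ∧ Maximal (fun G => IsFilter G ∧ Disjoint G S) P := by
  refine zorn_subset_nonempty {G | IsFilter G ∧ Disjoint G S} ?_ F ⟨hF, hFS⟩
  intro c hc hchain hne
  refine ⟨⋃₀ c, ⟨?_, ?_⟩, fun G hG => Set.subset_sUnion_of_mem hG⟩
  · exact isFilter_sUnion_of_directedOn (fun G hG => (hc hG).1) hchain.directedOn hne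
  · exact Set.disjoint_sUnion_left.2 fun G hG => (hc hG).2

theorem exists_sup_mem_of_maximal_disjoint
    (hP : Maximal (fun G => IsFilter G ∧ Disjoint G S) P) (hxy : x ⊔ y ∈ P) (hx : x ∉ P) :
    ∃ s ∈ S, s ⊔ y ∈ P := by
  by_contra! hS
  have hdisj : Disjoint ((· ⊔ y) ⁻¹' P) S := Set.disjoint_right.2 hS
  have hsub : (· ⊔ y) ⁻¹' P ⊆ P :=
    hP.le_of_ge ⟨hP.prop.1.preimage_sup_right y, hdisj⟩ (hP.prop.1.subset_preimage_sup_right y)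
  exact hx (hsub hxy)

theorem isPrimeFilter_of_maximal_disjoint (hS : SupClosed S) (hne : S.Nonempty)
    (hP : Maximal (fun G => IsFilter G ∧ Disjoint G S) P) : IsPrimeFilter P := by
  obtain ⟨hfilter, hdisj⟩ := hP.prop
  refine ⟨hfilter, ?_, fun x y hxy => ?_⟩
  · rintro rfl
    exact hne.ne_empty (Set.univ_disjoint.1 hdisj)
  · by_contra! ⟨hx, hy⟩
    obtain ⟨s, hs, hsy⟩ := exists_sup_mem_of_maximal_disjoint hP hxy hx
    obtain ⟨t, ht, hts⟩ := exists_sup_mem_of_maximal_disjoint hP (sup_comm s y ▸ hsy) hy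
    exact Set.disjoint_left.1 hdisj hts (hS ht hs)

theorem IsFilter.exists_isPrimeFilter_disjoint (hF : IsFilter F) (hS : SupClosed S)
    (hne : S.Nonempty) (hFS : Disjoint F S) : ∃ P, IsPrimeFilter P ∧ F ⊆ P ∧ Disjoint P S :=
  let ⟨P, hFP, hP⟩ := hF.exists_maximal_disjoint hFS
  ⟨P, isPrimeFilter_of_maximal_disjoint hS hne hP, hFP, hP.prop.2⟩

theorem sInter_primeFilters_general (hF : IsFilter F) :
    ⋂₀ {P : Set L | IsPrimeFilter P ∧ F ⊆ P} = F := by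
  refine Set.Subset.antisymm (fun a ha => ?_) (Set.subset_sInter fun P hP => hP.2)
  by_contra haF
  obtain ⟨P, hP, hFP, haP⟩ := hF.exists_isPrimeFilter_disjoint supClosed_singleton
    (Set.singleton_nonempty a) (Set.disjoint_singleton_right.2 haF)
  exact Set.disjoint_singleton_right.1 haP (ha P ⟨hP, hFP⟩)

end

/-- the intersection of all prime filters of `L` is `{1}`. -/
theorem sInter_primeFilters (L : Type*) [ResiduatedLattice L] :
    ⋂₀ {P : Set L | IsPrimeFilter P} = ({⊤} : Set L) := by
  have top_subset (P : Set L) (hP : IsPrimeFilter P) : {⊤} ⊆ P :=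
    Set.singleton_subset_iff.2 hP.1.top_mem
  simpa only [and_iff_left_of_imp (top_subset _)] using
    sInter_primeFilters_general (isFilter_singleton_top (L := L))

end ResiduatedLattice
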